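/- Let (K,Φ) be a compact Hausdorff uniform space, 𝕏 a σ-finite measure space, and ℳ a Banach L^0(𝕏)-module. Then the unique linear continuous operator 𝔧 : UC_ord(K;L^0(𝕏)) ⊗̂_ε ℳ → UC_ord(K;ℳ) satisfying 𝔧(f ⊗ v)(p) = f(p)·v for every f ∈ UC_ord(K;L^0(𝕏)), v ∈ ℳ and p ∈ K, is an isomorphism of Banach L^0(𝕏)-modules. -/

import Mathlib

open MeasureTheory Filter Set TensorProduct

noncomputable section

namespace Paper

variable {X : Type*} [MeasurableSpace X]

/-- The space `L⁰(𝕏)` of real-valued measurable functions up to `μ`-a.e. equality. -/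
abbrev L0 (μ : Measure X) : Type _ := X →ₘ[μ] ℝ

instance (μ : Measure X) : CommRing (L0 μ) :=
  { (inferInstance : AddCommGroup (L0 μ)), (inferInstance : CommMonoid (L0 μ)) with
    left_distrib := fun a b c => AEEqFun.toGerm_injective <| by
      simp only [AEEqFun.mul_toGerm, AEEqFun.add_toGerm, mul_add]
    right_distrib := fun a b c => AEEqFun.toGerm_injective <| by
      simp only [AEEqFun.mul_toGerm, AEEqFun.add_toGerm, add_mul]
    zero_mul := fun a => AEEqFun.toGerm_injective <| by
      simp only [AEEqFun.mul_toGerm, AEEqFun.zero_toGerm, zero_mul]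
    mul_zero := fun a => AEEqFun.toGerm_injective <| by
      simp only [AEEqFun.mul_toGerm, AEEqFun.zero_toGerm, mul_zero] }

/-- The distance on `L⁰(𝕏)` inducing the topology of convergence in measure, defined through
the auxiliary finite measure `μ.toFinite` (which satisfies `μ ≪ μ.toFinite ≪ μ`). -/
noncomputable def dL0 (μ : Measure X) [SFinite μ] (f g : L0 μ) : ℝ :=
  ∫ x, min |f x - g x| 1 ∂(μ.toFinite)

/-- A Banach `L⁰(𝕏)`-module: a module over `L⁰(𝕏)` endowed with a pointwise norm, complete
with respect to the induced distance. -/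
class BanachMod (μ : Measure X) [SFinite μ] (M : Type*) [AddCommGroup M]
    [Module (L0 μ) M] where
  pn : M → L0 μ
  pn_nonneg : ∀ v : M, 0 ≤ pn v
  pn_eq_zero : ∀ v : M, pn v = 0 ↔ v = 0
  pn_add_le : ∀ v w : M, pn (v + w) ≤ pn v + pn w
  pn_smul : ∀ (f : L0 μ) (v : M), pn (f • v) = |f| * pn v
  complete : ∀ u : ℕ → M,
    (∀ ε : ℝ, 0 < ε → ∃ N : ℕ, ∀ m ≥ N, ∀ n ≥ N, dL0 μ (pn (u m - u n)) 0 < ε) →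
    ∃ v : M, Tendsto (fun n => dL0 μ (pn (u n - v)) 0) atTop (nhds 0)

/-- The pointwise norm of a Banach `L⁰(𝕏)`-module, with the measure explicit. -/
noncomputable def pn (μ : Measure X) [SFinite μ] {M : Type*} [AddCommGroup M]
    [Module (L0 μ) M] [BanachMod μ M] (v : M) : L0 μ :=
  BanachMod.pn v

/-- The distance on a Banach `L⁰(𝕏)`-module. -/
noncomputable def dM (μ : Measure X) [SFinite μ] {M : Type*} [AddCommGroup M]
    [Module (L0 μ) M] [BanachMod μ M] (v w : M) : ℝ :=
  dL0 μ (pn μ (v - w)) 0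

section Defs

variable (μ : Measure X) [SFinite μ]
variable {M N : Type*} [AddCommGroup M] [Module (L0 μ) M] [BanachMod μ M]
  [AddCommGroup N] [Module (L0 μ) N] [BanachMod μ N]

/-- The set of admissible bounds of a map between Banach `L⁰(𝕏)`-modules; the pointwise norm
`|T|` of a homomorphism is the infimum of this set. -/
def homBddSet (T : M → N) : Set (L0 μ) :=
  {g | 0 ≤ g ∧ ∀ v, pn μ (T v) ≤ g * pn μ v}

/-- A homomorphism of Banach `L⁰(𝕏)`-modules: an `L⁰(𝕏)`-linear map admitting a bound
`g ∈ L⁰(𝕏)⁺` with `|T v| ≤ g |v|` (equivalently, `L⁰(𝕏)`-linear and continuous). -/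
def IsHom (T : M →ₗ[L0 μ] N) : Prop :=
  ∃ g, g ∈ homBddSet μ (⇑T)

/-- The set of admissible bounds of an `L⁰(𝕏)`-valued map (for elements of the dual module). -/
def dualBddSet (ω : M → L0 μ) : Set (L0 μ) :=
  {g | 0 ≤ g ∧ ∀ v, |ω v| ≤ g * pn μ v}

/-- Membership in the dual module `ℳ*`: an `L⁰(𝕏)`-linear map `ω : ℳ → L⁰(𝕏)` admitting a
bound `g ∈ L⁰(𝕏)⁺` with `|ω v| ≤ g |v|`. -/
def IsDual (ω : M →ₗ[L0 μ] L0 μ) : Prop :=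
  ∃ g, g ∈ dualBddSet μ (⇑ω)

/-- Membership in the unit disc `𝔻_{ℳ*}` of the dual module: `|ω| ≤ 1`, equivalently
`|ω v| ≤ |v|` for every `v`. -/
def InDualDisc (ω : M →ₗ[L0 μ] L0 μ) : Prop :=
  ∀ v, |ω v| ≤ pn μ v

/-- The family of pointwise norms `|s - ∑_{i ∈ F ∪ G} v i|` for `G` finite disjoint from `F`,
whose `F`-indexed inf-sup being `0` defines `s = ∑_{i∈I} v i`. -/
def sumUB {I : Type*} (v : I → M) (s : M) (F : Finset I) : Set (L0 μ) :=
  {g | ∃ G : Finset I, Disjoint G F ∧ g = pn μ (s - (∑ i ∈ F, v i + ∑ i ∈ G, v i))}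

/-- `HasSumMod μ v s` means that the family `{v_i}` is summable in the Banach `L⁰(𝕏)`-module
with sum `s`, i.e. `⋀_F ⋁_G |s - ∑_{i ∈ F ∪ G} v_i| = 0` (the inner suprema being the values
of `b`, and the outer infimum being `0`). -/
def HasSumMod {I : Type*} (v : I → M) (s : M) : Prop :=
  ∃ b : Finset I → L0 μ, (∀ F, IsLUB (sumUB μ v s F) (b F)) ∧ IsGLB (Set.range b) 0

/-- A family in a Banach `L⁰(𝕏)`-module is summable if it has a sum. -/
def SummableMod {I : Type*} (v : I → M) : Prop :=
  ∃ s, HasSumMod μ v s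

/-- The partial sums `∑_{i ∈ F} |v i|` of the pointwise norms of a family; the element `|v|₁`
of `ℓ₁(I, ℳ)` is the supremum of this set. -/
def l1PartialSums {I : Type*} (v : I → M) : Set (L0 μ) :=
  {g | ∃ F : Finset I, g = ∑ i ∈ F, pn μ (v i)}

/-- Membership in `ℓ₁(I, ℳ)`: the partial sums of the pointwise norms admit a supremum
(equivalently, an upper bound) in `L⁰(𝕏)`. -/
def Meml1 {I : Type*} (v : I → M) : Prop :=
  ∃ b, IsLUB (l1PartialSums μ v) b

/-- The partial sums `∑_{i ∈ F} |v i|` for an `L⁰(𝕏)`-valued family. -/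
def l1PartialSumsF {I : Type*} (v : I → L0 μ) : Set (L0 μ) :=
  {g | ∃ F : Finset I, g = ∑ i ∈ F, |v i|}

/-- Membership in `ℓ₁(I, L⁰(𝕏))`. -/
def Meml1F {I : Type*} (v : I → L0 μ) : Prop :=
  ∃ b, IsLUB (l1PartialSumsF μ v) b

/-- The set whose infimum defines the projective pointwise norm: all values
`∑_{i=1}^n |v_i||w_i|` over representations `α = ∑_{i=1}^n v_i ⊗ w_i`. -/
def piReps (α : M ⊗[L0 μ] N) : Set (L0 μ) :=
  {g | ∃ (n : ℕ) (v : Fin n → M) (w : Fin n → N),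
    α = ∑ i, v i ⊗ₜ[L0 μ] w i ∧ g = ∑ i, pn μ (v i) * pn μ (w i)}

/-- The set whose supremum defines the injective pointwise norm: all values
`|∑_{i=1}^n ω(v_i) η(w_i)|` over representations `α = ∑_{i=1}^n v_i ⊗ w_i` and elements
`ω ∈ 𝔻_{ℳ*}`, `η ∈ 𝔻_{𝒩*}`. -/
def epsReps (α : M ⊗[L0 μ] N) : Set (L0 μ) :=
  {g | ∃ (n : ℕ) (v : Fin n → M) (w : Fin n → N)
    (ω : M →ₗ[L0 μ] L0 μ) (η : N →ₗ[L0 μ] L0 μ), InDualDisc μ ω ∧ InDualDisc μ η ∧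
    α = ∑ i, v i ⊗ₜ[L0 μ] w i ∧ g = |∑ i, ω (v i) * η (w i)|}

/-- `IsPiTensor μ M N P e` states that the Banach `L⁰(𝕏)`-module `P`, together with the
`L⁰(𝕏)`-linear map `e` defined on the algebraic tensor product, realizes the projective
tensor product `ℳ ⊗̂_π 𝒩`: the pointwise norm of `e α` is the projective pointwise norm
`|α|_π` and the image of `e` is dense. -/
structure IsPiTensor (M N P : Type*) [AddCommGroup M] [Module (L0 μ) M] [BanachMod μ M]
    [AddCommGroup N] [Module (L0 μ) N] [BanachMod μ N]
    [AddCommGroup P] [Module (L0 μ) P] [BanachMod μ P]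
    (e : M ⊗[L0 μ] N →ₗ[L0 μ] P) : Prop where
  pn_emb : ∀ α : M ⊗[L0 μ] N, IsGLB (piReps μ α) (pn μ (e α))
  dense : ∀ p : P, ∀ ε : ℝ, 0 < ε → ∃ α : M ⊗[L0 μ] N, dM μ (e α) p < ε

/-- `IsEpsTensor μ M N P e` states that the Banach `L⁰(𝕏)`-module `P`, together with the
`L⁰(𝕏)`-linear map `e` defined on the algebraic tensor product, realizes the injective
tensor product `ℳ ⊗̂_ε 𝒩`: the pointwise norm of `e α` is the injective pointwise norm
`|α|_ε` and the image of `e` is dense. -/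
structure IsEpsTensor (M N P : Type*) [AddCommGroup M] [Module (L0 μ) M] [BanachMod μ M]
    [AddCommGroup N] [Module (L0 μ) N] [BanachMod μ N]
    [AddCommGroup P] [Module (L0 μ) P] [BanachMod μ P]
    (e : M ⊗[L0 μ] N →ₗ[L0 μ] P) : Prop where
  pn_emb : ∀ α : M ⊗[L0 μ] N, IsLUB (epsReps μ α) (pn μ (e α))
  dense : ∀ p : P, ∀ ε : ℝ, 0 < ε → ∃ α : M ⊗[L0 μ] N, dM μ (e α) p < ε

end Defs

/-- The set `{ |v(p)| : p ∈ Ω }` of pointwise norms of the values of a module-valued map;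
the map `v` is order-bounded when this set has a supremum `|v| = ⋁_{p ∈ Ω} |v(p)|`. -/
def rangePn (μ : Measure X) [SFinite μ] {M : Type*} [AddCommGroup M] [Module (L0 μ) M]
    [BanachMod μ M] {Ω : Type*} (v : Ω → M) : Set (L0 μ) :=
  {g | ∃ p : Ω, g = pn μ (v p)}

/-- A map `v : Ω → ℳ` is order-bounded if `⋁_{p ∈ Ω} |v(p)|` exists in `L⁰(𝕏)⁺`. -/
def OrderBounded (μ : Measure X) [SFinite μ] {M : Type*} [AddCommGroup M] [Module (L0 μ) M]
    [BanachMod μ M] {Ω : Type*} (v : Ω → M) : Prop :=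
  ∃ b, IsLUB (rangePn μ v) b

/-- The set `{ |v(p) - v(q)| : (p,q) ∈ 𝒰 }` whose supremum is `Var(v; 𝒰)`. -/
def varSet (μ : Measure X) [SFinite μ] {M : Type*} [AddCommGroup M] [Module (L0 μ) M]
    [BanachMod μ M] {Ω : Type*} (v : Ω → M) (U : Set (Ω × Ω)) : Set (L0 μ) :=
  {g | ∃ pq ∈ U, g = pn μ (v pq.1 - v pq.2)}

/-- A map `v : Ω → ℳ` on a uniform space is uniformly order-continuous if
`⋀_{𝒰 ∈ Φ} Var(v; 𝒰) = 0`, where `Var(v; 𝒰) = ⋁_{(p,q) ∈ 𝒰} |v(p) - v(q)|` (the suprema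
being the values of `V`, and the infimum over all entourages being `0`). -/
def UnifOrdCont (μ : Measure X) [SFinite μ] {M : Type*} [AddCommGroup M] [Module (L0 μ) M]
    [BanachMod μ M] {Ω : Type*} [UniformSpace Ω] (v : Ω → M) : Prop :=
  ∃ V : {U : Set (Ω × Ω) // U ∈ uniformity Ω} → L0 μ,
    (∀ U, IsLUB (varSet μ v U.1) (V U)) ∧ IsGLB (Set.range V) 0

/-- Membership in `UC_ord(Ω; ℳ)`: order-bounded and uniformly order-continuous. -/
def MemUCord (μ : Measure X) [SFinite μ] {M : Type*} [AddCommGroup M] [Module (L0 μ) M]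
    [BanachMod μ M] {Ω : Type*} [UniformSpace Ω] (v : Ω → M) : Prop :=
  OrderBounded μ v ∧ UnifOrdCont μ v

/-- The set `{ |f(p)| : p ∈ K }` for an `L⁰(𝕏)`-valued map. -/
def rangeAbs (μ : Measure X) [SFinite μ] {K : Type*} (f : K → L0 μ) : Set (L0 μ) :=
  {g | ∃ p : K, g = |f p|}

/-- Order-boundedness for `L⁰(𝕏)`-valued maps. -/
def OrderBoundedF (μ : Measure X) [SFinite μ] {K : Type*} (f : K → L0 μ) : Prop :=
  ∃ b, IsLUB (rangeAbs μ f) b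

/-- The set `{ |f(p) - f(q)| : (p,q) ∈ U }` for an `L⁰(𝕏)`-valued map. -/
def varSetF (μ : Measure X) [SFinite μ] {K : Type*} (f : K → L0 μ) (U : Set (K × K)) :
    Set (L0 μ) :=
  {g | ∃ pq ∈ U, g = |f pq.1 - f pq.2|}

/-- Uniform order-continuity for `L⁰(𝕏)`-valued maps on a uniform space. -/
def UnifOrdContF (μ : Measure X) [SFinite μ] {K : Type*} [UniformSpace K] (f : K → L0 μ) :
    Prop :=
  ∃ V : {U : Set (K × K) // U ∈ uniformity K} → L0 μ,
    (∀ U, IsLUB (varSetF μ f U.1) (V U)) ∧ IsGLB (Set.range V) 0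

/-- `(U, ev)` is a realization of `UC_ord(K; L⁰(𝕏))` as a Banach `L⁰(𝕏)`-module. -/
structure IsUCordL0 (μ : Measure X) [SFinite μ] (K : Type*) [UniformSpace K]
    (U : Type*) [AddCommGroup U] [Module (L0 μ) U] [BanachMod μ U]
    (ev : U →ₗ[L0 μ] (K → L0 μ)) : Prop where
  inj : Function.Injective ev
  mem : ∀ u : U, OrderBoundedF μ (ev u) ∧ UnifOrdContF μ (ev u)
  surj : ∀ f : K → L0 μ, OrderBoundedF μ f → UnifOrdContF μ f → ∃ u, ev u = f
  norm : ∀ u : U, IsLUB (rangeAbs μ (ev u)) (pn μ u)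

/-- `(W, ev)` is a realization of `UC_ord(K; ℳ)` as a Banach `L⁰(𝕏)`-module. -/
structure IsUCordMod (μ : Measure X) [SFinite μ] (K : Type*) [UniformSpace K]
    (M : Type*) [AddCommGroup M] [Module (L0 μ) M] [BanachMod μ M]
    (W : Type*) [AddCommGroup W] [Module (L0 μ) W] [BanachMod μ W]
    (ev : W →ₗ[L0 μ] (K → M)) : Prop where
  inj : Function.Injective ev
  mem : ∀ w : W, OrderBounded μ (ev w) ∧ UnifOrdCont μ (ev w)
  surj : ∀ f : K → M, OrderBounded μ f → UnifOrdCont μ f → ∃ w, ev w = f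
  norm : ∀ w : W, IsLUB (rangePn μ (ev w)) (pn μ w)

/-!
A functional `η` in the dual disc of `ℳ` satisfies `∑ ω(fᵢ) η(vᵢ) = ω(∑ η(vᵢ) fᵢ)`, and evaluation
at a point of `K` belongs to the dual disc of `UC_ord(K; L⁰(𝕏))`. Since the pointwise norm of every
element of `ℳ` is attained by a functional of the dual disc (Hahn–Banach over `L⁰(𝕏)`), the
injective norm of `∑ fᵢ ⊗ vᵢ` is the supremum over `p` of `|∑ fᵢ(p) vᵢ|`. Hence `𝔧` preserves the
pointwise norm. Its range is dense: `w` is close to `∑ φᵢ ⊗ w(xᵢ)` when `(φᵢ)` is a partition of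
unity subordinate to a cover of `K` by small neighbourhoods of the points `xᵢ`. Completeness of the
injective tensor product makes the range closed.

Two facts about `L⁰(𝕏)` carry the analysis. The functional `f ↦ ∫ arctan f` is strictly monotone
and continuous in measure, so a downward directed set which is bounded below has an infimum in its
closure; this yields Dedekind completeness and lets uniform order-continuity be tested with `dL0`.
For Hahn–Banach, a minimal sublinear map is linear, and the only division needed is by
elements above `1`.
-/

namespace L0

section Order

variable {μ : Measure X}

instance : IsOrderedRing (L0 μ) :=
  Function.Injective.isOrderedRing AEEqFun.toGerm AEEqFun.zero_toGerm AEEqFun.one_toGerm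
    AEEqFun.add_toGerm AEEqFun.mul_toGerm Iff.rfl

protected lemma abs_mul (f g : L0 μ) : |f * g| = |f| * |g| := by
  apply AEEqFun.ext
  filter_upwards [AEEqFun.coeFn_abs (f * g), AEEqFun.coeFn_mul f g, AEEqFun.coeFn_mul |f| |g|,
    AEEqFun.coeFn_abs f, AEEqFun.coeFn_abs g] with x habs hmul hmul' hf hg
  rw [habs, hmul, hmul', Pi.mul_apply, Pi.mul_apply, hf, hg, abs_mul]

/-- The embedding `ℝ → L⁰(𝕏)` of the constants. -/
def const (μ : Measure X) : ℝ →+ L0 μ :=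
  AddMonoidHom.mk' (AEEqFun.const X) fun _ _ => rfl

@[simp]
lemma const_one : const μ 1 = 1 := rfl

lemma coeFn_const (t : ℝ) : const μ t =ᵐ[μ] fun _ => t := AEEqFun.coeFn_const X t

lemma abs_const (t : ℝ) : |const μ t| = const μ |t| := by
  apply AEEqFun.ext
  filter_upwards [AEEqFun.coeFn_abs (const μ t), coeFn_const (μ := μ) t,
    coeFn_const (μ := μ) |t|] with x habs ht ht'
  rw [habs, ht, ht']

lemma const_mono : Monotone (const μ) := fun s t hst => by
  rw [← AEEqFun.coeFn_le]
  filter_upwards [coeFn_const (μ := μ) s, coeFn_const (μ := μ) t] with x hs ht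
  rwa [hs, ht]

lemma const_nonneg {t : ℝ} (ht : 0 ≤ t) : 0 ≤ const μ t := by
  simpa using const_mono (μ := μ) ht

end Order

end L0

/-! ### Convergence in measure -/

lemma min_abs_add_one_le (a b : ℝ) : min |a + b| 1 ≤ min |a| 1 + min |b| 1 := by
  rcases min_cases |a| 1 with ha | ha <;> rcases min_cases |b| 1 with hb | hb <;>
    rcases min_cases |a + b| 1 with hab | hab <;>
    linarith [abs_add_le a b, abs_nonneg a, abs_nonneg b]

lemma min_abs_mul_one_le (a b : ℝ) {c : ℝ} (hc : 1 ≤ c) :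
    min |a * b| 1 ≤ min |c⁻¹ * a| 1 + c * min |b| 1 := by
  have hc0 : 0 < c := one_pos.trans_le hc
  have hb : 0 ≤ c * min |b| 1 := by positivity
  rw [abs_mul, abs_mul, abs_of_pos (inv_pos.2 hc0)]
  rcases le_total 1 (c⁻¹ * |a|) with ha | ha
  · rw [min_eq_right ha]
    exact (min_le_right _ _).trans (le_add_of_nonneg_right hb)
  rw [min_eq_left ha]
  rw [inv_mul_le_one₀ hc0] at ha
  refine le_add_of_nonneg_of_le (by positivity) ?_
  rw [mul_min_of_nonneg _ _ hc0.le, mul_one]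
  exact min_le_min (mul_le_mul_of_nonneg_right ha (abs_nonneg b)) hc

namespace L0

section Norm

variable {μ : Measure X} [SFinite μ]

lemma aestronglyMeasurable_toFinite (f : L0 μ) : AEStronglyMeasurable f μ.toFinite :=
  f.aestronglyMeasurable.mono_ac (toFinite_absolutelyContinuous μ)

lemma ae_toFinite_le {f g : L0 μ} (h : f ≤ g) : ∀ᵐ x ∂μ.toFinite, f x ≤ g x := by
  rw [ae_toFinite]
  exact AEEqFun.coeFn_le.2 h

lemma integrable_min_abs_one (f : L0 μ) : Integrable (fun x => min |f x| 1) μ.toFinite := by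
  refine .of_bound (f.aestronglyMeasurable_toFinite.norm.inf aestronglyMeasurable_const) 1
    (.of_forall fun x => ?_)
  rw [Real.norm_of_nonneg (by positivity)]
  exact min_le_right _ _

lemma dL0_zero_right (f : L0 μ) : dL0 μ f 0 = ∫ x, min |f x| 1 ∂μ.toFinite := by
  refine integral_congr_ae ?_
  rw [ae_toFinite]
  filter_upwards [AEEqFun.coeFn_zero (μ := μ) (β := ℝ)] with x hx
  simp [hx]

lemma dL0_mono {f g : L0 μ} (h : |f| ≤ |g|) : dL0 μ f 0 ≤ dL0 μ g 0 := by
  rw [dL0_zero_right, dL0_zero_right]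
  refine integral_mono_ae f.integrable_min_abs_one g.integrable_min_abs_one ?_
  rw [ae_toFinite]
  filter_upwards [AEEqFun.coeFn_le.2 h, AEEqFun.coeFn_abs f, AEEqFun.coeFn_abs g]
    with x hx hf hg
  rw [hf, hg] at hx
  exact min_le_min_right _ hx

lemma dL0_add_le (f g : L0 μ) : dL0 μ (f + g) 0 ≤ dL0 μ f 0 + dL0 μ g 0 := by
  rw [dL0_zero_right, dL0_zero_right, dL0_zero_right,
    ← integral_add f.integrable_min_abs_one g.integrable_min_abs_one]
  refine integral_mono_ae (f + g).integrable_min_abs_one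
    (f.integrable_min_abs_one.add g.integrable_min_abs_one) ?_
  rw [ae_toFinite]
  filter_upwards [AEEqFun.coeFn_add f g] with x hx
  rw [hx]
  exact min_abs_add_one_le (f x) (g x)

lemma eq_zero_of_dL0_eq_zero {f : L0 μ} (h : dL0 μ f 0 = 0) : f = 0 := by
  rw [dL0_zero_right, integral_eq_zero_iff_of_nonneg (fun x => by positivity)
    f.integrable_min_abs_one, EventuallyEq, ae_toFinite] at h
  apply AEEqFun.ext
  filter_upwards [h, AEEqFun.coeFn_zero (μ := μ) (β := ℝ)] with x hx h0
  rw [h0]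
  by_contra hne
  exact (lt_min (abs_pos.2 hne) one_pos).ne' hx

/-- The norm `‖f‖ = ∫ min(|f|, 1)` on `L⁰(𝕏)`, whose metric is `dL0`. It is not homogeneous. -/
instance : NormedAddCommGroup (L0 μ) :=
  AddGroupNorm.toNormedAddCommGroup
    { toFun := fun f => dL0 μ f 0
      map_zero' := by
        rw [dL0_zero_right, ← integral_zero X ℝ]
        refine integral_congr_ae ?_
        rw [ae_toFinite]
        filter_upwards [AEEqFun.coeFn_zero (μ := μ) (β := ℝ)] with x hx
        simp [hx]
      add_le' := dL0_add_le
      neg' := fun f => le_antisymm (dL0_mono (abs_neg f).le) (dL0_mono (abs_neg f).ge)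
      eq_zero_of_map_eq_zero' := fun _ => eq_zero_of_dL0_eq_zero }

lemma norm_eq_dL0 (f : L0 μ) : ‖f‖ = dL0 μ f 0 := rfl

instance : HasSolidNorm (L0 μ) := ⟨fun _ _ => dL0_mono⟩

lemma tendsto_of_ae_tendsto {f : ℕ → L0 μ} {g : L0 μ}
    (h : ∀ᵐ x ∂μ, Tendsto (fun n => f n x) atTop (nhds (g x))) : Tendsto f atTop (nhds g) := by
  rw [tendsto_iff_norm_sub_tendsto_zero]
  simp only [norm_eq_dL0, dL0_zero_right]
  rw [← integral_zero X ℝ]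
  refine tendsto_integral_of_dominated_convergence (fun _ => 1)
    (fun n => (f n - g).integrable_min_abs_one.aestronglyMeasurable) (integrable_const _)
    (fun n => .of_forall fun x => ?_) ?_
  · rw [Real.norm_of_nonneg (by positivity)]
    exact min_le_right _ _
  · have hsub : ∀ᵐ x ∂μ, ∀ n, (f n - g) x = f n x - g x :=
      ae_all_iff.2 fun n => AEEqFun.coeFn_sub (f n) g
    rw [ae_toFinite]
    filter_upwards [h, hsub] with x hx hsub
    simp only [hsub]
    simpa using ((hx.sub_const (g x)).abs).min (tendsto_const_nhds (x := (1 : ℝ)))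

lemma tendsto_const_zero : Tendsto (const μ) (nhds 0) (nhds 0) := by
  rw [tendsto_iff_seq_tendsto]
  refine fun t ht => tendsto_of_ae_tendsto ?_
  have hconst : ∀ᵐ x ∂μ, ∀ n, const μ (t n) x = t n :=
    ae_all_iff.2 fun n => coeFn_const (t n)
  filter_upwards [hconst, AEEqFun.coeFn_zero (μ := μ) (β := ℝ)] with x hx h0
  simpa only [Function.comp_apply, hx, h0, Pi.zero_apply] using ht

lemma tendsto_const_mul_zero (f : L0 μ) :
    Tendsto (fun n : ℕ => const μ (n + 1 : ℝ)⁻¹ * f) atTop (nhds 0) := by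
  refine tendsto_of_ae_tendsto ?_
  have hmul : ∀ᵐ x ∂μ, ∀ n : ℕ, (const μ (n + 1 : ℝ)⁻¹ * f) x = (n + 1 : ℝ)⁻¹ * f x :=
    ae_all_iff.2 fun n => by
      filter_upwards [AEEqFun.coeFn_mul (const μ (n + 1 : ℝ)⁻¹) f,
        coeFn_const (μ := μ) (n + 1 : ℝ)⁻¹] with x hx hn
      rw [hx, Pi.mul_apply, hn]
  filter_upwards [hmul, AEEqFun.coeFn_zero (μ := μ) (β := ℝ)] with x hx h0
  simp only [hx, h0]
  simpa using (tendsto_one_div_add_atTop_nhds_zero_nat (𝕜 := ℝ)).mul_const (f x)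

lemma norm_mul_le (f h : L0 μ) {c : ℝ} (hc : 1 ≤ c) :
    ‖f * h‖ ≤ ‖const μ c⁻¹ * f‖ + c * ‖h‖ := by
  simp only [norm_eq_dL0, dL0_zero_right]
  rw [← integral_const_mul, ← integral_add (integrable_min_abs_one _)
    (h.integrable_min_abs_one.const_mul c)]
  refine integral_mono_ae (integrable_min_abs_one _)
    ((integrable_min_abs_one _).add (h.integrable_min_abs_one.const_mul c)) ?_
  rw [ae_toFinite]
  filter_upwards [AEEqFun.coeFn_mul f h, AEEqFun.coeFn_mul (const μ c⁻¹) f,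
    coeFn_const (μ := μ) c⁻¹] with x hfh hcf hcx
  rw [hfh, hcf, Pi.mul_apply, Pi.mul_apply, hcx]
  exact min_abs_mul_one_le (f x) (h x) hc

lemma continuous_const_mul (f : L0 μ) : Continuous fun h => f * h := by
  refine continuous_of_continuousAt_zero (AddMonoidHom.mulLeft f)
    (Metric.continuousAt_iff.2 fun ε hε => ?_)
  simp only [AddMonoidHom.coe_mulLeft, mul_zero, dist_zero_right]
  obtain ⟨n, hn⟩ : ∃ n : ℕ, ‖const μ (n + 1 : ℝ)⁻¹ * f‖ < ε / 2 :=
    ((tendsto_const_mul_zero f).norm.eventually_lt_const (by simpa using hε)).exists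
  refine ⟨ε / 2 / (n + 1), by positivity, fun h hh => ?_⟩
  rw [lt_div_iff₀' (by positivity)] at hh
  calc ‖f * h‖ ≤ ‖const μ (n + 1 : ℝ)⁻¹ * f‖ + (n + 1) * ‖h‖ := norm_mul_le f h (by simp)
    _ < ε := by linarith

end Norm

end L0

/-! ### Order completeness of `L⁰(𝕏)` -/

lemma abs_arctan_sub_arctan_le (a b : ℝ) : |Real.arctan a - Real.arctan b| ≤ |a - b| := by
  have hderiv (t : ℝ) : ‖deriv Real.arctan t‖₊ ≤ 1 := by
    rw [Real.deriv_arctan, ← NNReal.coe_le_coe, coe_nnnorm, Real.norm_of_nonneg (by positivity)]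
    exact div_le_one_of_le₀ (by nlinarith [sq_nonneg t]) (by positivity)
  simpa [Real.dist_eq] using
    (lipschitzWith_of_nnnorm_deriv_le Real.differentiable_arctan hderiv).dist_le_mul a b

lemma abs_arctan_sub_arctan_le_pi_mul_min (a b : ℝ) :
    |Real.arctan a - Real.arctan b| ≤ Real.pi * min |a - b| 1 := by
  rw [mul_min_of_nonneg _ _ Real.pi_pos.le, mul_one]
  refine le_min ?_ (abs_sub_le_iff.2 ?_)
  · refine (abs_arctan_sub_arctan_le a b).trans (le_mul_of_one_le_left (abs_nonneg _) ?_)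
    linarith [Real.pi_gt_three]
  · constructor <;> linarith [Real.arctan_lt_pi_div_two a, Real.neg_pi_div_two_lt_arctan a,
      Real.arctan_lt_pi_div_two b, Real.neg_pi_div_two_lt_arctan b]

lemma exists_antitone_seq_le {α : Type*} [Preorder α] {S : Set α} (hS : DirectedOn (· ≥ ·) S)
    {a : ℕ → α} (ha : ∀ n, a n ∈ S) :
    ∃ s : ℕ → α, Antitone s ∧ (∀ n, s n ∈ S) ∧ ∀ n, s n ≤ a n := by
  choose c hcS hcl hcr using hS
  let s (n : ℕ) : S := n.rec ⟨a 0, ha 0⟩ fun n t => ⟨c t t.2 (a (n + 1)) (ha _), hcS _ _ _ _⟩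
  refine ⟨fun n => (s n).1, antitone_nat_of_succ_le fun n => hcl _ (s n).2 _ (ha (n + 1)),
    fun n => (s n).2, fun n => ?_⟩
  cases n with
  | zero => exact le_rfl
  | succ n => exact hcr _ (s n).2 _ (ha (n + 1))

lemma exists_isGLB_mem_closure_of_directedOn {α : Type*} [Lattice α] [TopologicalSpace α]
    [OrderClosedTopology α] [ContinuousInf α]
    (hseq : ∀ s : ℕ → α, Antitone s → BddBelow (range s) → ∃ g, Tendsto s atTop (nhds g))
    {Φ : α → ℝ} (hmono : StrictMono Φ) (hcont : Continuous Φ)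
    {S : Set α} (hne : S.Nonempty) (hbdd : BddBelow S) (hdir : DirectedOn (· ≥ ·) S) :
    ∃ g ∈ closure S, IsGLB S g := by
  have hΦbdd : BddBelow (Φ '' S) := hmono.monotone.map_bddBelow hbdd
  obtain ⟨u, -, hu, huS⟩ := exists_seq_tendsto_sInf (hne.image Φ) hΦbdd
  choose a haS hau using huS
  obtain ⟨s, hanti, hsS, hsa⟩ := exists_antitone_seq_le hdir haS
  obtain ⟨g, hg⟩ := hseq s hanti (hbdd.mono (range_subset_iff.2 hsS))
  have hinf_le (t : α) (ht : t ∈ S) : sInf (Φ '' S) ≤ Φ t := csInf_le hΦbdd ⟨t, ht, rfl⟩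
  have hΦg : Φ g ≤ sInf (Φ '' S) :=
    le_of_tendsto_of_tendsto' ((hcont.tendsto g).comp hg) hu fun n =>
      (hmono.monotone (hsa n)).trans (hau n).le
  refine ⟨g, mem_closure_of_tendsto hg (.of_forall hsS), fun t ht => ?_,
    fun l hl => ge_of_tendsto' hg fun n => hl (hsS n)⟩
  have hΦinf : Φ g ≤ Φ (g ⊓ t) := by
    refine hΦg.trans (ge_of_tendsto' ((hcont.tendsto _).comp (hg.inf_nhds tendsto_const_nhds))
      fun n => ?_)
    obtain ⟨c, hcS, hcs, hct⟩ := hdir _ (hsS n) t ht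
    exact (hinf_le c hcS).trans (hmono.monotone (le_inf hcs hct))
  exact inf_eq_left.1 (inf_le_left.eq_of_not_lt fun hlt => (hmono hlt).not_ge hΦinf)

namespace L0

section Dedekind

variable {μ : Measure X} [SFinite μ]

lemma exists_tendsto_of_antitone {s : ℕ → L0 μ} (hanti : Antitone s)
    (hbdd : BddBelow (range s)) : ∃ g, Tendsto s atTop (nhds g) := by
  obtain ⟨l, hl⟩ := hbdd
  have hmeas : AEStronglyMeasurable (fun x => ⨅ n, s n x) μ :=
    (AEMeasurable.iInf fun n => (s n).aestronglyMeasurable.aemeasurable).aestronglyMeasurable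
  refine ⟨AEEqFun.mk _ hmeas, tendsto_of_ae_tendsto ?_⟩
  have hanti_ae : ∀ᵐ x ∂μ, ∀ n, s (n + 1) x ≤ s n x :=
    ae_all_iff.2 fun n => AEEqFun.coeFn_le.2 (hanti n.le_succ)
  have hl_ae : ∀ᵐ x ∂μ, ∀ n, l x ≤ s n x :=
    ae_all_iff.2 fun n => AEEqFun.coeFn_le.2 (hl (mem_range_self n))
  filter_upwards [hanti_ae, hl_ae, AEEqFun.coeFn_mk _ hmeas] with x hanti hl hg
  rw [hg]
  exact tendsto_atTop_ciInf (antitone_nat_of_succ_le hanti) ⟨l x, forall_mem_range.2 hl⟩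

/-- The functional `f ↦ ∫ arctan f`: a bounded substitute for the integral which still
detects strict inequalities in `L⁰(𝕏)`. -/
def arctanIntegral (f : L0 μ) : ℝ := ∫ x, Real.arctan (f x) ∂μ.toFinite

lemma integrable_arctan (f : L0 μ) : Integrable (fun x => Real.arctan (f x)) μ.toFinite := by
  refine .of_bound (Real.continuous_arctan.comp_aestronglyMeasurable
    f.aestronglyMeasurable_toFinite) (Real.pi / 2) (.of_forall fun x => ?_)
  exact abs_le.2 ⟨(Real.neg_pi_div_two_lt_arctan _).le, (Real.arctan_lt_pi_div_two _).le⟩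

lemma arctanIntegral_strictMono : StrictMono (arctanIntegral : L0 μ → ℝ) := by
  intro f g hfg
  have hle : ∀ᵐ x ∂μ.toFinite, Real.arctan (f x) ≤ Real.arctan (g x) := by
    filter_upwards [ae_toFinite_le hfg.le] with x hx using Real.arctan_strictMono.monotone hx
  refine (integral_mono_ae f.integrable_arctan g.integrable_arctan hle).lt_of_ne fun heq => ?_
  rw [integral_eq_iff_of_ae_le f.integrable_arctan g.integrable_arctan hle,
    EventuallyEq, ae_toFinite] at heq
  refine hfg.ne (AEEqFun.ext ?_)
  filter_upwards [heq] with x hx using Real.arctan_injective hx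

lemma dist_arctanIntegral_le (f g : L0 μ) :
    dist (arctanIntegral f) (arctanIntegral g) ≤ Real.pi * dist f g := by
  rw [dist_eq_norm f g, norm_eq_dL0, dL0_zero_right, ← integral_const_mul, Real.dist_eq,
    arctanIntegral, arctanIntegral, ← integral_sub f.integrable_arctan g.integrable_arctan]
  refine abs_integral_le_integral_abs.trans (integral_mono_ae
    (f.integrable_arctan.sub g.integrable_arctan).abs
    ((f - g).integrable_min_abs_one.const_mul _) ?_)
  rw [ae_toFinite]
  filter_upwards [AEEqFun.coeFn_sub f g] with x hx
  rw [hx]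
  exact abs_arctan_sub_arctan_le_pi_mul_min (f x) (g x)

lemma continuous_arctanIntegral : Continuous (arctanIntegral : L0 μ → ℝ) :=
  (LipschitzWith.of_dist_le_mul (K := ⟨Real.pi, Real.pi_pos.le⟩)
    dist_arctanIntegral_le).continuous

lemma exists_isGLB_mem_closure {S : Set (L0 μ)} (hne : S.Nonempty) (hbdd : BddBelow S)
    (hdir : DirectedOn (· ≥ ·) S) : ∃ g ∈ closure S, IsGLB S g :=
  exists_isGLB_mem_closure_of_directedOn (fun _ => exists_tendsto_of_antitone)
    arctanIntegral_strictMono continuous_arctanIntegral hne hbdd hdir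

lemma exists_isLUB {S : Set (L0 μ)} (hne : S.Nonempty) (hbdd : BddAbove S) :
    ∃ g, IsLUB S g := by
  obtain ⟨g, -, hg⟩ := exists_isGLB_mem_closure hbdd
    (hne.mono (subset_lowerBounds_upperBounds S)) fun a ha b hb =>
      ⟨a ⊓ b, fun s hs => le_inf (ha hs) (hb hs), inf_le_left, inf_le_right⟩
  exact ⟨g, isGLB_upperBounds.1 hg⟩

open Classical in
instance : ConditionallyCompleteLattice (L0 μ) :=
  letI : SupSet (L0 μ) := ⟨fun S => if h : ∃ g, IsLUB S g then h.choose else 0⟩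
  conditionallyCompleteLatticeOfLatticeOfsSup (L0 μ) fun S hbdd hne => by
    have h := exists_isLUB hne hbdd
    rw [show sSup S = h.choose from dif_pos h]
    exact h.choose_spec

end Dedekind

end L0

/-! ### Hahn–Banach theorem over an ordered ring -/

/-- Bounded inversion: in an ordered ring, every element above `1` has a positive inverse.
It holds in `L⁰(𝕏)` and substitutes for the field structure in the Hahn–Banach theorem. -/
class BoundedInversion (R : Type*) [CommRing R] [PartialOrder R] : Prop where
  exists_inv (a : R) : 1 ≤ a → ∃ b, 0 ≤ b ∧ b * a = 1

instance L0.instBoundedInversion {μ : Measure X} : BoundedInversion (L0 μ) where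
  exists_inv a ha := by
    have hapos : ∀ᵐ x ∂μ, 0 < a x := by
      filter_upwards [AEEqFun.coeFn_le.2 ha, coeFn_const (μ := μ) 1] with x hx h1
      exact (h1.trans_gt one_pos).trans_le hx
    refine ⟨AEEqFun.compMeasurable (·⁻¹) measurable_inv a, AEEqFun.coeFn_le.1 ?_,
      AEEqFun.ext ?_⟩
    · filter_upwards [hapos, AEEqFun.coeFn_compMeasurable _ measurable_inv a,
        AEEqFun.coeFn_zero (μ := μ) (β := ℝ)] with x hx hinv h0
      rw [h0, hinv]
      exact (inv_pos.2 hx).le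
    · filter_upwards [hapos, AEEqFun.coeFn_compMeasurable _ measurable_inv a,
        AEEqFun.coeFn_mul (AEEqFun.compMeasurable (·⁻¹) measurable_inv a) a,
        coeFn_const (μ := μ) 1] with x hx hinv hmul h1
      rw [hmul, Pi.mul_apply, hinv]
      exact (inv_mul_cancel₀ hx.ne').trans h1.symm

section BoundedInversion

variable {R : Type*} [CommRing R]

lemma le_of_mul_le_mul_left_of_one_le [PartialOrder R] [IsOrderedRing R] [BoundedInversion R]
    {u x y : R} (hu : 1 ≤ u) (h : u * x ≤ u * y) : x ≤ y := by
  obtain ⟨b, hb, hbu⟩ := BoundedInversion.exists_inv u hu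
  simpa only [← mul_assoc, hbu, one_mul] using mul_le_mul_of_nonneg_left h hb

lemma le_mul_ciInf [ConditionallyCompleteLattice R] [IsOrderedRing R] [BoundedInversion R]
    {ι : Type*} [Nonempty ι] {y : ι → R} (hbdd : BddBelow (range y)) {c x : R} (hc : 0 ≤ c)
    (h : ∀ i, x ≤ c * y i) : x ≤ c * ⨅ i, y i := by
  have hu : 1 ≤ 1 + c := le_add_of_nonneg_right hc
  obtain ⟨b, -, hbu⟩ := BoundedInversion.exists_inv (1 + c) hu
  have hle : b * (x + ⨅ i, y i) ≤ ⨅ i, y i := le_ciInf fun i => by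
    refine le_of_mul_le_mul_left_of_one_le hu ?_
    rw [← mul_assoc, mul_comm (1 + c), hbu, one_mul, add_mul, one_mul, add_comm x]
    exact add_le_add (ciInf_le hbdd i) (h i)
  have hle' := mul_le_mul_of_nonneg_left hle (zero_le_one.trans hu)
  rwa [← mul_assoc, mul_comm (1 + c), hbu, one_mul, add_mul, one_mul, add_comm x,
    add_le_add_iff_left] at hle'

end BoundedInversion

/-- A sublinear map from a module to an ordered ring. Only one inequality of positive homogeneity
is required: the other follows when the ring has bounded inversion. -/
structure IsSublinear {R M : Type*} [CommRing R] [PartialOrder R] [AddCommGroup M] [Module R M]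
    (p : M → R) : Prop where
  map_add_le (v w : M) : p (v + w) ≤ p v + p w
  map_smul_le {c : R} (hc : 0 ≤ c) (v : M) : p (c • v) ≤ c * p v

namespace IsSublinear

variable {R M : Type*} [CommRing R] [AddCommGroup M] [Module R M]

section PartialOrder

variable [PartialOrder R] [IsOrderedRing R] {p : M → R}

lemma map_zero (hp : IsSublinear p) : p 0 = 0 := by
  refine le_antisymm (by simpa using hp.map_smul_le le_rfl 0) ?_
  simpa using hp.map_add_le 0 0

lemma neg_map_neg_le (hp : IsSublinear p) (v : M) : -p (-v) ≤ p v := by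
  rw [neg_le_iff_add_nonneg, ← hp.map_zero, ← add_neg_cancel v]
  exact hp.map_add_le _ _

lemma map_smul [BoundedInversion R] (hp : IsSublinear p) {c : R} (hc : 0 ≤ c) (v : M) :
    p (c • v) = c * p v := by
  refine (hp.map_smul_le hc v).antisymm ?_
  have hu : 1 ≤ 1 + c := le_add_of_nonneg_right hc
  obtain ⟨b, hb, hbu⟩ := BoundedInversion.exists_inv (1 + c) hu
  have hle : p v ≤ b * p ((1 + c) • v) := by
    simpa only [smul_smul, hbu, one_smul] using hp.map_smul_le hb ((1 + c) • v)
  have hle' : (1 + c) * p v ≤ p v + p (c • v) :=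
    calc (1 + c) * p v ≤ (1 + c) * (b * p ((1 + c) • v)) :=
          mul_le_mul_of_nonneg_left hle (zero_le_one.trans hu)
      _ = p ((1 + c) • v) := by rw [← mul_assoc, mul_comm (1 + c), hbu, one_mul]
      _ ≤ p v + p (c • v) := by simpa only [add_smul, one_smul] using hp.map_add_le v (c • v)
  rwa [add_mul, one_mul, add_le_add_iff_left] at hle'

end PartialOrder

variable [ConditionallyCompleteLattice R] [IsOrderedRing R] [BoundedInversion R] {p : M → R}

/-- The largest sublinear map below `p` whose value at `-z` is at most `-p z`; it is
`v ↦ ⋀_{c ≥ 0} p(v + c z) - c p(z)`. -/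
def tilt (p : M → R) (z v : M) : R := ⨅ c : Ici (0 : R), p (v + c.1 • z) - c.1 * p z

lemma bddBelow_range_tilt (hp : IsSublinear p) (z v : M) :
    BddBelow (range fun c : Ici (0 : R) => p (v + c.1 • z) - c.1 * p z) := by
  refine ⟨-p (-v), forall_mem_range.2 fun c => ?_⟩
  rw [le_sub_iff_add_le, neg_add_le_iff_le_add, ← hp.map_smul c.2]
  simpa using hp.map_add_le (-v) (v + c.1 • z)

lemma tilt_le (hp : IsSublinear p) (z v : M) {c : R} (hc : 0 ≤ c) :
    tilt p z v ≤ p (v + c • z) - c * p z :=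
  ciInf_le (hp.bddBelow_range_tilt z v) ⟨c, hc⟩

lemma tilt_le_self (hp : IsSublinear p) (z : M) : tilt p z ≤ p := fun v => by
  simpa using hp.tilt_le z v le_rfl

lemma tilt_neg_le (hp : IsSublinear p) (z : M) : tilt p z (-z) ≤ -p z := by
  simpa [hp.map_zero] using hp.tilt_le z (-z) zero_le_one

lemma isSublinear_tilt (hp : IsSublinear p) (z : M) : IsSublinear (tilt p z) where
  map_add_le v w := le_ciInf_add_ciInf fun c d => by
    calc tilt p z (v + w) ≤ p (v + w + (c.1 + d.1) • z) - (c.1 + d.1) * p z :=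
          hp.tilt_le z _ (add_nonneg c.2 d.2)
      _ ≤ p (v + c.1 • z) + p (w + d.1 • z) - (c.1 + d.1) * p z := by
          rw [add_smul, add_add_add_comm]
          exact sub_le_sub_right (hp.map_add_le _ _) _
      _ = _ := by ring
  map_smul_le {c} hc v := le_mul_ciInf (hp.bddBelow_range_tilt z v) hc fun d => by
    calc tilt p z (c • v) ≤ p (c • v + (c * d.1) • z) - c * d.1 * p z :=
          hp.tilt_le z _ (mul_nonneg hc d.2)
      _ = c * (p (v + d.1 • z) - d.1 * p z) := by
          rw [mul_smul, ← smul_add, hp.map_smul hc]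
          ring

lemma map_neg_of_minimal (hp : Minimal IsSublinear p) (z : M) : p (-z) = -p z := by
  have htilt : tilt p z = p := hp.eq_of_le (hp.prop.isSublinear_tilt z) (hp.prop.tilt_le_self z)
  refine le_antisymm ?_ (neg_le.1 (by simpa using hp.prop.neg_map_neg_le z))
  simpa only [htilt] using hp.prop.tilt_neg_le z

lemma exists_linearMap_of_minimal (hp : Minimal IsSublinear p) : ∃ η : M →ₗ[R] R, ⇑η = p := by
  have hadd (v w : M) : p (v + w) = p v + p w := by
    refine (hp.prop.map_add_le v w).antisymm ?_
    simpa [map_neg_of_minimal hp] using hp.prop.map_add_le (v + w) (-w)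
  refine ⟨{ toFun := p, map_add' := hadd, map_smul' := fun c v => ?_ }, rfl⟩
  rw [← posPart_sub_negPart c, sub_smul, sub_eq_add_neg, hadd, map_neg_of_minimal hp,
    hp.prop.map_smul (posPart_nonneg c), hp.prop.map_smul (negPart_nonneg c), RingHom.id_apply,
    smul_eq_mul, sub_mul, sub_eq_add_neg]

lemma exists_lowerBound_of_isChain {N : M → R} {C : Set (M → R)}
    (hC : ∀ p ∈ C, IsSublinear p ∧ p ≤ N) (hchain : IsChain (· ≤ ·) C) (hne : C.Nonempty) :
    ∃ q, IsSublinear q ∧ ∀ p ∈ C, q ≤ p := by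
  have := hne.to_subtype
  have hbdd (v : M) : BddBelow (range fun p : C => p.1 v) :=
    ⟨-N (-v), forall_mem_range.2 fun p =>
      (neg_le_neg ((hC p p.2).2 (-v))).trans ((hC p p.2).1.neg_map_neg_le v)⟩
  refine ⟨fun v => ⨅ p : C, p.1 v, ⟨fun v w => le_ciInf_add_ciInf fun p q => ?_,
    fun hc v => le_mul_ciInf (hbdd v) hc fun p =>
      (ciInf_le (hbdd _) p).trans ((hC p p.2).1.map_smul_le hc v)⟩,
    fun p hp v => ciInf_le (hbdd v) ⟨p, hp⟩⟩
  rcases hchain.total p.2 q.2 with hpq | hqp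
  · exact (ciInf_le (hbdd _) p).trans
      (((hC p p.2).1.map_add_le v w).trans (add_le_add_right (hpq w) _))
  · exact (ciInf_le (hbdd _) q).trans
      (((hC q q.2).1.map_add_le v w).trans (add_le_add_left (hqp v) _))

lemma exists_minimal_le (hp : IsSublinear p) : ∃ q ≤ p, Minimal IsSublinear q := by
  have hlower (C : Set (M → R)) (hC : C ⊆ {q | IsSublinear q ∧ q ≤ p})
      (hchain : IsChain (· ≤ ·) C) (q : M → R) (hq : q ∈ C) :
      ∃ r ∈ {q | IsSublinear q ∧ q ≤ p}, ∀ s ∈ C, r ≤ s := by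
    obtain ⟨r, hr, hrC⟩ := exists_lowerBound_of_isChain (fun _ h => hC h) hchain ⟨q, hq⟩
    exact ⟨r, ⟨hr, (hrC q hq).trans (hC hq).2⟩, hrC⟩
  obtain ⟨q, hqp, hq, hqmin⟩ := zorn_le_nonempty₀ (α := (M → R)ᵒᵈ) _
    (fun C hC hchain => hlower C hC hchain.symm) p ⟨hp, le_rfl⟩
  exact ⟨q, hqp, hq.1, fun r hr hrq => hqmin ⟨hr, le_trans hrq hqp⟩ hrq⟩

theorem exists_linearMap_le_eq (hp : IsSublinear p) (z : M) :
    ∃ η : M →ₗ[R] R, (∀ v, η v ≤ p v) ∧ η z = p z := by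
  obtain ⟨q, hqle, hq⟩ := (hp.isSublinear_tilt z).exists_minimal_le
  obtain ⟨η, rfl⟩ := exists_linearMap_of_minimal hq
  have hηp (v : M) : η v ≤ p v := (hqle v).trans (hp.tilt_le_self z v)
  refine ⟨η, hηp, (hηp z).antisymm ?_⟩
  simpa using (hqle (-z)).trans (hp.tilt_neg_le z)

end IsSublinear

/-! ### Banach modules as metric spaces -/

section Module

variable {μ : Measure X} [SFinite μ] {M : Type*} [AddCommGroup M] [Module (L0 μ) M]
  [BanachMod μ M]

lemma pn_nonneg (v : M) : 0 ≤ pn μ v := BanachMod.pn_nonneg v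

lemma pn_eq_zero {v : M} : pn μ v = 0 ↔ v = 0 := BanachMod.pn_eq_zero v

@[simp]
lemma pn_zero : pn μ (0 : M) = 0 := pn_eq_zero.2 rfl

lemma pn_add_le (v w : M) : pn μ (v + w) ≤ pn μ v + pn μ w := BanachMod.pn_add_le v w

lemma pn_smul (f : L0 μ) (v : M) : pn μ (f • v) = |f| * pn μ v := BanachMod.pn_smul f v

lemma pn_neg (v : M) : pn μ (-v) = pn μ v := by
  rw [← neg_one_smul (L0 μ) v, pn_smul, abs_neg, abs_of_nonneg zero_le_one, one_mul]

lemma pn_sub_comm (v w : M) : pn μ (v - w) = pn μ (w - v) := by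
  rw [← pn_neg, neg_sub]

lemma abs_pn_sub_pn_le (v w : M) : |pn μ v - pn μ w| ≤ pn μ (v - w) := by
  rw [abs_le', neg_sub, sub_le_iff_le_add, sub_le_iff_le_add]
  exact ⟨by simpa using pn_add_le (μ := μ) (v - w) w,
    by simpa [pn_sub_comm v w] using pn_add_le (μ := μ) (w - v) v⟩

lemma pn_sum_le {ι : Type*} (s : Finset ι) (v : ι → M) :
    pn μ (∑ i ∈ s, v i) ≤ ∑ i ∈ s, pn μ (v i) :=
  Finset.le_sum_of_subadditive (pn μ) pn_zero.le pn_add_le s v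

lemma isSublinear_pn : IsSublinear (pn μ : M → L0 μ) where
  map_add_le := pn_add_le
  map_smul_le hc v := by rw [pn_smul, abs_of_nonneg hc]

lemma exists_inDualDisc_apply_eq_pn (v : M) : ∃ η, InDualDisc μ η ∧ η v = pn μ v := by
  obtain ⟨η, hη, hηv⟩ := IsSublinear.exists_linearMap_le_eq (R := L0 μ) isSublinear_pn v
  refine ⟨η, fun w => abs_le'.2 ⟨hη w, ?_⟩, hηv⟩
  rw [← map_neg, ← pn_neg w]
  exact hη (-w)

variable (μ M) in
/-- The norm `‖v‖ = ∫ min(|v|, 1)` on a Banach `L⁰(𝕏)`-module, whose metric is `dM`. It is not an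
instance because `μ` cannot be inferred from `M`. -/
abbrev pnNormedAddCommGroup : NormedAddCommGroup M :=
  AddGroupNorm.toNormedAddCommGroup
    { toFun := fun v => ‖pn μ v‖
      map_zero' := by rw [pn_zero, norm_zero]
      add_le' := fun v w => by
        refine (norm_le_norm_of_abs_le_abs ?_).trans (norm_add_le (pn μ v) (pn μ w))
        rw [abs_of_nonneg (pn_nonneg _),
          abs_of_nonneg (add_nonneg (pn_nonneg v) (pn_nonneg w))]
        exact pn_add_le v w
      neg' := fun v => by rw [pn_neg]
      eq_zero_of_map_eq_zero' := fun v hv => pn_eq_zero.1 (norm_eq_zero.1 hv) }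

lemma dist_eq_dM (v w : M) :
    letI := pnNormedAddCommGroup μ M
    dist v w = dM μ v w := by
  let := pnNormedAddCommGroup μ M
  exact dist_eq_norm v w

lemma completeSpace_of_banachMod :
    letI := pnNormedAddCommGroup μ M
    CompleteSpace M := by
  let := pnNormedAddCommGroup μ M
  refine Metric.complete_of_cauchySeq_tendsto fun u hu => ?_
  obtain ⟨v, hv⟩ := BanachMod.complete (μ := μ) u fun ε hε => by
    obtain ⟨n, hn⟩ := Metric.cauchySeq_iff.1 hu ε hε
    exact ⟨n, fun k hk l hl => (dist_eq_dM (u k) (u l)).symm.trans_lt (hn k hk l hl)⟩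
  exact ⟨v, tendsto_iff_dist_tendsto_zero.2 (hv.congr fun n => (dist_eq_dM (u n) v).symm)⟩

lemma continuous_pn :
    letI := pnNormedAddCommGroup μ M
    Continuous (pn μ : M → L0 μ) := by
  let := pnNormedAddCommGroup μ M
  refine (LipschitzWith.mk_one fun v w => ?_).continuous
  rw [dist_eq_norm, dist_eq_norm]
  refine norm_le_norm_of_abs_le_abs ((abs_pn_sub_pn_le v w).trans ?_)
  exact le_abs_self _

lemma IsHom.continuous {N : Type*} [AddCommGroup N] [Module (L0 μ) N] [BanachMod μ N]
    {T : M →ₗ[L0 μ] N} (hT : IsHom μ T) :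
    letI := pnNormedAddCommGroup μ M
    letI := pnNormedAddCommGroup μ N
    Continuous T := by
  let := pnNormedAddCommGroup μ M
  let := pnNormedAddCommGroup μ N
  obtain ⟨g, hg, hTg⟩ := hT
  have hlim : Tendsto (fun v : M => ‖g * pn μ v‖) (nhds 0) (nhds 0) := by
    have h := ((L0.continuous_const_mul g).comp (continuous_pn (M := M))).norm.tendsto 0
    simpa only [Function.comp_apply, pn_zero, mul_zero, norm_zero] using h
  have hle (v : M) : ‖pn μ (T v)‖ ≤ ‖g * pn μ v‖ := by
    refine norm_le_norm_of_abs_le_abs ?_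
    rw [abs_of_nonneg (pn_nonneg _), abs_of_nonneg (mul_nonneg hg (pn_nonneg v))]
    exact hTg v
  refine continuous_of_continuousAt_zero T ?_
  rw [ContinuousAt, map_zero]
  exact squeeze_zero_norm hle hlim

lemma continuousConstSMul_of_banachMod :
    letI := pnNormedAddCommGroup μ M
    ContinuousConstSMul (L0 μ) M :=
  let := pnNormedAddCommGroup μ M
  ⟨fun f => IsHom.continuous (T := LinearMap.lsmul (L0 μ) M f)
    ⟨|f|, abs_nonneg f, fun v => (pn_smul f v).le⟩⟩

lemma denseRange_iff_dM {A : Type*} {e : A → M} :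
    letI := pnNormedAddCommGroup μ M
    DenseRange e ↔ ∀ v, ∀ ε > 0, ∃ a, dM μ (e a) v < ε := by
  let := pnNormedAddCommGroup μ M
  simp only [Metric.denseRange_iff, dist_comm _ (e _), dist_eq_dM, gt_iff_lt]

end Module

section Extension

variable {μ : Measure X} [SFinite μ] {A E W : Type*} [AddCommGroup A] [Module (L0 μ) A]
  [AddCommGroup E] [Module (L0 μ) E] [BanachMod μ E]
  [AddCommGroup W] [Module (L0 μ) W] [BanachMod μ W]

lemma isHom_of_pn_eq {T : E →ₗ[L0 μ] W} (hT : ∀ x, pn μ (T x) = pn μ x) : IsHom μ T :=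
  ⟨1, zero_le_one, fun x => by rw [hT, one_mul]⟩

lemma IsHom.eq_of_dense {ι : Type*} {e : ι → E} (he : ∀ x, ∀ ε > 0, ∃ a, dM μ (e a) x < ε)
    {S T : E →ₗ[L0 μ] W} (hS : IsHom μ S) (hT : IsHom μ T) (h : ∀ a, S (e a) = T (e a)) :
    S = T := by
  let := pnNormedAddCommGroup μ E
  let := pnNormedAddCommGroup μ W
  exact LinearMap.coe_injective ((denseRange_iff_dM.2 he).equalizer hS.continuous
    hT.continuous (funext h))

lemma bijective_of_pn_eq_of_dense {T : E →ₗ[L0 μ] W} (hT : ∀ x, pn μ (T x) = pn μ x)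
    (hdense : ∀ w, ∀ ε > 0, ∃ x, dM μ (T x) w < ε) : Function.Bijective T := by
  let := pnNormedAddCommGroup μ E
  let := pnNormedAddCommGroup μ W
  have := completeSpace_of_banachMod (μ := μ) (M := E)
  have hisom : Isometry T := AddMonoidHomClass.isometry_of_norm T fun x => congrArg norm (hT x)
  refine ⟨hisom.injective, range_eq_univ.1 ?_⟩
  rw [← hisom.isClosedEmbedding.isClosed_range.closure_eq]
  exact (denseRange_iff_dM.2 hdense).closure_range

theorem exists_extension_of_pn_eq {e : A →ₗ[L0 μ] E}
    (he : ∀ x, ∀ ε > 0, ∃ a, dM μ (e a) x < ε) {t : A →ₗ[L0 μ] W}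
    (ht : ∀ a, pn μ (t a) = pn μ (e a)) :
    ∃ T : E →ₗ[L0 μ] W, (∀ a, T (e a) = t a) ∧ ∀ x, pn μ (T x) = pn μ x := by
  let := pnNormedAddCommGroup μ E
  let := pnNormedAddCommGroup μ W
  let := SeminormedAddCommGroup.induced A E e
  have := completeSpace_of_banachMod (μ := μ) (M := W)
  have := continuousConstSMul_of_banachMod (μ := μ) (M := E)
  have := continuousConstSMul_of_banachMod (μ := μ) (M := W)
  have he_isom : Isometry e := AddMonoidHomClass.isometry_of_norm e fun _ => rfl
  have ht_isom : Isometry t := AddMonoidHomClass.isometry_of_norm t fun a => congrArg norm (ht a)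
  have he_dense : DenseRange e := denseRange_iff_dM.2 he
  let T := ContinuousLinearMap.extend ⟨t, ht_isom.continuous⟩ ⟨e, he_isom.continuous⟩
  have hT (a : A) : T (e a) = t a :=
    ContinuousLinearMap.extend_eq _ he_dense he_isom.isUniformInducing a
  exact ⟨T, hT, congrFun (he_dense.equalizer (continuous_pn.comp T.continuous) continuous_pn
    (funext fun a => (congrArg (pn μ) (hT a)).trans (ht a)))⟩

end Extension

/-! ### Uniform order-continuity -/

section OrderVanishing

variable {μ : Measure X} {K : Type*} [UniformSpace K]

/-- The condition `⋀_{𝒰 ∈ Φ} ⋁_{pq ∈ 𝒰} D pq = 0`; uniform order-continuity of `v` is the case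
`D (p, q) = |v p - v q|`, up to unfolding definitions. -/
def OrderVanishing (D : K × K → L0 μ) : Prop :=
  ∃ V : {U : Set (K × K) // U ∈ uniformity K} → L0 μ,
    (∀ U, IsLUB {g | ∃ pq ∈ U.1, g = D pq} (V U)) ∧ IsGLB (range V) 0

namespace OrderVanishing

variable {D : K × K → L0 μ}

lemma bddAbove_range (hD : OrderVanishing D) : BddAbove (range D) := by
  obtain ⟨V, hV, -⟩ := hD
  refine ⟨V ⟨univ, univ_mem⟩, ?_⟩
  rintro _ ⟨pq, rfl⟩
  exact (hV _).1 ⟨pq, mem_univ pq, rfl⟩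

lemma exists_entourage [SFinite μ] (hD : OrderVanishing D) {ε : ℝ} (hε : 0 < ε) :
    ∃ U ∈ uniformity K, ∃ g, (∀ pq ∈ U, D pq ≤ g) ∧ ‖g‖ < ε := by
  obtain ⟨V, hV, hV0⟩ := hD
  have hmono {U U'} (h : U.1 ⊆ U'.1) : V U ≤ V U' := by
    refine (hV U).mono (hV U') ?_
    rintro _ ⟨pq, hpq, rfl⟩
    exact ⟨pq, h hpq, rfl⟩
  have hdir : DirectedOn (· ≥ ·) (range V) := by
    rintro _ ⟨U, rfl⟩ _ ⟨U', rfl⟩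
    exact ⟨_, ⟨⟨U.1 ∩ U'.1, inter_mem U.2 U'.2⟩, rfl⟩, hmono inter_subset_left,
      hmono inter_subset_right⟩
  obtain ⟨g, hg, hglb⟩ :=
    L0.exists_isGLB_mem_closure ⟨_, mem_range_self ⟨univ, univ_mem⟩⟩ hV0.bddBelow hdir
  obtain rfl := hglb.unique hV0
  obtain ⟨_, ⟨U, rfl⟩, hU⟩ := Metric.mem_closure_iff.1 hg ε hε
  rw [dist_zero_left] at hU
  exact ⟨U.1, U.2, V U, fun pq hpq => (hV U).1 ⟨pq, hpq, rfl⟩, hU⟩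

variable [SFinite μ] [Nonempty K]

lemma of_exists_entourage (hD0 : ∀ pq, 0 ≤ D pq) (hbdd : BddAbove (range D))
    (h : ∀ ε > 0, ∃ U ∈ uniformity K, ∃ g, (∀ pq ∈ U, D pq ≤ g) ∧ ‖g‖ < ε) :
    OrderVanishing D := by
  inhabit K
  have hdiag (U : {U : Set (K × K) // U ∈ uniformity K}) : (default, default) ∈ U.1 :=
    refl_mem_uniformity U.2
  have hsub (U : Set (K × K)) : {g | ∃ pq ∈ U, g = D pq} ⊆ range D := by
    rintro _ ⟨pq, -, rfl⟩
    exact ⟨pq, rfl⟩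
  choose V hV using fun U : {U : Set (K × K) // U ∈ uniformity K} =>
    L0.exists_isLUB (S := {g | ∃ pq ∈ U.1, g = D pq}) ⟨_, _, hdiag U, rfl⟩ (hbdd.mono (hsub U))
  refine ⟨V, hV, ?_, fun c hc => ?_⟩
  · rintro _ ⟨U, rfl⟩
    exact (hD0 _).trans ((hV U).1 ⟨_, hdiag U, rfl⟩)
  · rw [← posPart_eq_zero, ← norm_le_zero_iff]
    refine le_of_forall_pos_lt_add fun ε hε => ?_
    obtain ⟨U, hU, g, hDg, hg⟩ := h ε hε
    have hcg : c ≤ g := (hc ⟨⟨U, hU⟩, rfl⟩).trans <| (hV ⟨U, hU⟩).2 <| by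
      rintro _ ⟨pq, hpq, rfl⟩
      exact hDg pq hpq
    have hg0 : 0 ≤ g := (hD0 _).trans (hDg _ (hdiag ⟨U, hU⟩))
    rw [zero_add]
    refine (norm_le_norm_of_abs_le_abs ?_).trans_lt hg
    rw [abs_of_nonneg (posPart_nonneg c), abs_of_nonneg hg0]
    exact sup_le hcg hg0

lemma const_mul (hD : OrderVanishing D) (hD0 : ∀ pq, 0 ≤ D pq) {c : L0 μ} (hc : 0 ≤ c) :
    OrderVanishing fun pq => c * D pq := by
  refine of_exists_entourage (fun pq => mul_nonneg hc (hD0 pq)) ?_ fun ε hε => ?_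
  · obtain ⟨b, hb⟩ := hD.bddAbove_range
    refine ⟨c * b, ?_⟩
    rintro _ ⟨pq, rfl⟩
    exact mul_le_mul_of_nonneg_left (hb ⟨pq, rfl⟩) hc
  · obtain ⟨δ, hδ, hcδ⟩ := Metric.continuousAt_iff.1 (L0.continuous_const_mul c).continuousAt ε hε
    obtain ⟨U, hU, g, hDg, hg⟩ := hD.exists_entourage hδ
    refine ⟨U, hU, c * g, fun pq hpq => mul_le_mul_of_nonneg_left (hDg pq hpq) hc, ?_⟩
    simpa only [mul_zero, dist_zero_right] using hcδ ((dist_zero_right g).trans_lt hg)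

end OrderVanishing

end OrderVanishing

section UCord

variable {μ : Measure X} [SFinite μ]

lemma OrderBoundedF.smul_const {K M : Type*} [Nonempty K] [AddCommGroup M] [Module (L0 μ) M]
    [BanachMod μ M] {f : K → L0 μ} (hf : OrderBoundedF μ f) (v : M) :
    OrderBounded μ fun p => f p • v := by
  inhabit K
  obtain ⟨b, hb⟩ := hf
  refine L0.exists_isLUB ⟨_, default, rfl⟩ ⟨b * pn μ v, ?_⟩
  rintro _ ⟨p, rfl⟩
  rw [pn_smul]
  exact mul_le_mul_of_nonneg_right (hb.1 ⟨p, rfl⟩) (pn_nonneg v)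

variable {K : Type*} [UniformSpace K] [Nonempty K]

lemma UnifOrdContF.smul_const {M : Type*} [AddCommGroup M] [Module (L0 μ) M] [BanachMod μ M]
    {f : K → L0 μ} (hf : UnifOrdContF μ f) (v : M) :
    UnifOrdCont μ fun p => f p • v := by
  have h : OrderVanishing fun pq : K × K => pn μ v * |f pq.1 - f pq.2| :=
    OrderVanishing.const_mul hf (fun _ => abs_nonneg _) (pn_nonneg v)
  simpa only [UnifOrdCont, varSet, ← sub_smul, pn_smul, mul_comm, OrderVanishing] using h

variable [CompactSpace K]

lemma orderBoundedF_const (φ : C(K, ℝ)) :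
    OrderBoundedF μ fun p => L0.const μ (φ p) := by
  inhabit K
  refine L0.exists_isLUB ⟨_, default, rfl⟩ ⟨L0.const μ ‖φ‖, ?_⟩
  rintro _ ⟨p, rfl⟩
  rw [L0.abs_const]
  exact L0.const_mono (φ.norm_coe_le_norm p)

lemma unifOrdContF_const (φ : C(K, ℝ)) : UnifOrdContF μ fun p => L0.const μ (φ p) := by
  suffices h : OrderVanishing fun pq : K × K => L0.const μ |φ pq.1 - φ pq.2| by
    simpa only [UnifOrdContF, varSetF, ← map_sub, L0.abs_const, OrderVanishing] using h
  refine .of_exists_entourage (fun _ => L0.const_nonneg (abs_nonneg _)) ?_ fun ε hε => ?_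
  · refine ⟨L0.const μ (‖φ‖ + ‖φ‖), ?_⟩
    rintro _ ⟨pq, rfl⟩
    exact L0.const_mono ((abs_sub _ _).trans
      (add_le_add (φ.norm_coe_le_norm pq.1) (φ.norm_coe_le_norm pq.2)))
  · obtain ⟨δ, hδ, hδε⟩ := Metric.tendsto_nhds_nhds.1 (L0.tendsto_const_zero (μ := μ)) ε hε
    have huc := CompactSpace.uniformContinuous_of_continuous φ.continuous
    refine ⟨_, huc (Metric.dist_mem_uniformity (half_pos hδ)), L0.const μ (δ / 2),
      fun pq hpq => L0.const_mono (le_of_lt hpq), ?_⟩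
    rw [← dist_zero_right]
    refine hδε ?_
    rw [dist_zero_right, Real.norm_of_nonneg (half_pos hδ).le]
    exact half_lt_self hδ

end UCord

section PartitionOfUnity

lemma exists_partitionOfUnity_entourage {K : Type*} [UniformSpace K] [CompactSpace K]
    {U : Set (K × K)} (hU : U ∈ uniformity K) :
    ∃ (t : Finset K) (φ : PartitionOfUnity t K), ∀ i p, φ i p ≠ 0 → (p, (i : K)) ∈ U := by
  have hnhds (i : K) : interior {q | (q, i) ∈ U} ∈ nhds i :=
    interior_mem_nhds.2 (mem_nhds_right i hU)
  obtain ⟨t, -, ht⟩ := isCompact_univ.elim_nhds_subcover _ fun i _ => hnhds i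
  have hcover : univ ⊆ ⋃ i : t, interior {q | (q, (i : K)) ∈ U} := by
    simpa only [iUnion_subtype] using ht
  obtain ⟨φ, hφ⟩ :=
    PartitionOfUnity.exists_isSubordinate isClosed_univ _ (fun _ => isOpen_interior) hcover
  refine ⟨t, φ, fun i p hp => ?_⟩
  have hpi : p ∈ {q | (q, (i : K)) ∈ U} := interior_subset (hφ i (subset_tsupport _ hp))
  exact hpi

variable {μ : Measure X} [SFinite μ] {M : Type*} [AddCommGroup M] [Module (L0 μ) M]
  [BanachMod μ M]

lemma pn_sum_smul_sub_le {ι : Type*} [Fintype ι] {f : ι → L0 μ} (hf : ∀ i, 0 ≤ f i)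
    (hsum : ∑ i, f i = 1) {v : ι → M} {w : M} {g : L0 μ}
    (hg : ∀ i, f i ≠ 0 → pn μ (v i - w) ≤ g) : pn μ (∑ i, f i • v i - w) ≤ g := by
  have hsplit : ∑ i, f i • v i - w = ∑ i, f i • (v i - w) := by
    simp only [smul_sub, Finset.sum_sub_distrib, ← Finset.sum_smul, hsum, one_smul]
  have hle (i : ι) : f i * pn μ (v i - w) ≤ f i * g := by
    rcases eq_or_ne (f i) 0 with h | h
    · rw [h, zero_mul, zero_mul]
    · exact mul_le_mul_of_nonneg_left (hg i h) (hf i)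
  calc pn μ (∑ i, f i • v i - w)
      ≤ ∑ i, pn μ (f i • (v i - w)) := hsplit ▸ pn_sum_le _ _
    _ = ∑ i, f i * pn μ (v i - w) := by simp only [pn_smul, abs_of_nonneg (hf _)]
    _ ≤ ∑ i, f i * g := Finset.sum_le_sum fun i _ => hle i
    _ = g := by rw [← Finset.sum_mul, hsum, one_mul]

lemma exists_sum_const_smul_approx {K : Type*} [UniformSpace K] [CompactSpace K] {w : K → M}
    (hw : UnifOrdCont μ w) {ε : ℝ} (hε : 0 < ε) :
    ∃ (t : Finset K) (φ : t → C(K, ℝ)) (g : L0 μ),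
      (∀ p, pn μ (∑ i, L0.const μ (φ i p) • w i - w p) ≤ g) ∧ dL0 μ g 0 < ε := by
  obtain ⟨U, hU, g, hwg, hg⟩ := OrderVanishing.exists_entourage hw hε
  obtain ⟨t, φ, hφ⟩ := exists_partitionOfUnity_entourage hU
  refine ⟨t, fun i => φ i, g, fun p => ?_, hg⟩
  refine pn_sum_smul_sub_le (fun i => L0.const_nonneg (φ.nonneg i p)) ?_ fun i hi => ?_
  · rw [← map_sum, ← finsum_eq_sum_of_fintype, φ.sum_eq_one (mem_univ p), L0.const_one]
  · rw [pn_sub_comm]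
    exact hwg (p, i) (hφ i p fun h => hi (by rw [h, map_zero]))

end PartitionOfUnity

/-! ### The operator `𝔧` -/

lemma OrderBoundedF.subsingleton {μ : Measure X} [SFinite μ] {K : Type*} [IsEmpty K]
    {f : K → L0 μ} (hf : OrderBoundedF μ f) : Subsingleton (L0 μ) := by
  obtain ⟨b, hb⟩ := hf
  have hbot (g : L0 μ) : b ≤ g := hb.2 fun _ ⟨p, _⟩ => isEmptyElim p
  have hnonpos (g : L0 μ) : g ≤ 0 := le_sub_self_iff b |>.1 (hbot (b - g))
  exact subsingleton_of_forall_eq 0 fun g =>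
    le_antisymm (hnonpos g) (neg_nonpos.1 (hnonpos (-g)))

section PointwiseTensor

variable {R K M U : Type*} [CommSemiring R] [AddCommMonoid M] [Module R M]
  [AddCommMonoid U] [Module R U]

variable (M) in
/-- The operator `𝔧` on the algebraic tensor product, with values in the functions on `K`:
`f ⊗ v` is sent to `p ↦ f(p) • v`, where `ev` turns elements of `U` into functions. -/
def pointwiseTensor (ev : U →ₗ[R] (K → R)) : U ⊗[R] M →ₗ[R] (K → M) :=
  LinearMap.pi fun p => TensorProduct.lift (LinearMap.lsmul R M ∘ₗ LinearMap.proj p ∘ₗ ev)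

variable {ev : U →ₗ[R] (K → R)}

lemma pointwiseTensor_tmul (u : U) (v : M) :
    pointwiseTensor M ev (u ⊗ₜ[R] v) = fun p => ev u p • v := rfl

lemma map_pointwiseTensor_sum {ι : Type*} [Fintype ι] (u : ι → U) (v : ι → M) (η : M →ₗ[R] R)
    (p : K) : η (pointwiseTensor M ev (∑ i, u i ⊗ₜ[R] v i) p) = ∑ i, ev (u i) p * η (v i) := by
  simp only [map_sum, Finset.sum_apply, pointwiseTensor_tmul, map_smul, smul_eq_mul]

end PointwiseTensor

section Realization

variable {μ : Measure X} [SFinite μ] {K : Type*} [UniformSpace K]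
  {M : Type*} [AddCommGroup M] [Module (L0 μ) M] [BanachMod μ M]
  {U : Type*} [AddCommGroup U] [Module (L0 μ) U] [BanachMod μ U]
  {W : Type*} [AddCommGroup W] [Module (L0 μ) W] [BanachMod μ W]
  {evU : U →ₗ[L0 μ] (K → L0 μ)} {evW : W →ₗ[L0 μ] (K → M)}

lemma IsUCordL0.upperBounds_epsReps (hU : IsUCordL0 μ K U evU) (α : U ⊗[L0 μ] M) :
    upperBounds (epsReps μ α) = upperBounds (rangePn μ (pointwiseTensor M evU α)) := by
  refine Subset.antisymm (fun b hb => ?_) fun b hb => ?_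
  · rintro _ ⟨p, rfl⟩
    obtain ⟨n, u, v, rfl⟩ := TensorProduct.exists_sum_tmul_eq α
    obtain ⟨η, hη, hη_norm⟩ := exists_inDualDisc_apply_eq_pn (μ := μ)
      (pointwiseTensor M evU (∑ i, u i ⊗ₜ[L0 μ] v i) p)
    rw [← hη_norm]
    refine (le_abs_self _).trans (hb ⟨n, u, v, LinearMap.proj p ∘ₗ evU, η,
      fun f => (hU.norm f).1 ⟨p, rfl⟩, hη, rfl, ?_⟩)
    rw [map_pointwiseTensor_sum]
    rfl
  · rintro _ ⟨n, u, v, ω, η, hω, hη, rfl, rfl⟩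
    have hω_sum : ∑ i, ω (u i) * η (v i) = ω (∑ i, η (v i) • u i) := by
      simp only [map_sum, map_smul, smul_eq_mul, mul_comm]
    have hη_sum (p : K) : evU (∑ i, η (v i) • u i) p =
        η (pointwiseTensor M evU (∑ i, u i ⊗ₜ[L0 μ] v i) p) := by
      rw [map_pointwiseTensor_sum]
      simp only [map_sum, map_smul, Finset.sum_apply, Pi.smul_apply, smul_eq_mul, mul_comm]
    rw [hω_sum]
    refine (hω _).trans ((hU.norm _).2 ?_)
    rintro _ ⟨p, rfl⟩
    rw [hη_sum]
    exact (hη _).trans (hb ⟨p, rfl⟩)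

lemma IsUCordMod.isLUB_epsReps (hU : IsUCordL0 μ K U evU) (hW : IsUCordMod μ K M W evW)
    {α : U ⊗[L0 μ] M} {w : W} (hw : evW w = pointwiseTensor M evU α) :
    IsLUB (epsReps μ α) (pn μ w) := by
  rw [IsLUB, hU.upperBounds_epsReps, ← hw]
  exact hW.norm w

variable [Nonempty K]

lemma IsUCordMod.exists_linearMap_eq_pointwiseTensor (hU : IsUCordL0 μ K U evU)
    (hW : IsUCordMod μ K M W evW) :
    ∃ t : U ⊗[L0 μ] M →ₗ[L0 μ] W, ∀ α, evW (t α) = pointwiseTensor M evU α := by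
  have hrange (α : U ⊗[L0 μ] M) : pointwiseTensor M evU α ∈ LinearMap.range evW := by
    induction α with
    | zero => rw [map_zero]; exact zero_mem _
    | tmul u v =>
      rw [pointwiseTensor_tmul]
      exact hW.surj _ ((hU.mem u).1.smul_const v) ((hU.mem u).2.smul_const v)
    | add α β hα hβ => rw [map_add]; exact add_mem hα hβ
  exact ⟨_, LinearMap.codRestrictOfInjective_comp_apply _ evW hW.inj hrange⟩

lemma IsUCordMod.exists_dM_lt [CompactSpace K] (hU : IsUCordL0 μ K U evU)
    (hW : IsUCordMod μ K M W evW) {t : U ⊗[L0 μ] M →ₗ[L0 μ] W}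
    (ht : ∀ α, evW (t α) = pointwiseTensor M evU α) (w : W) {ε : ℝ} (hε : 0 < ε) :
    ∃ α, dM μ (t α) w < ε := by
  obtain ⟨s, φ, g, happrox, hg⟩ := exists_sum_const_smul_approx (hW.mem w).2 hε
  choose u hu using fun i => hU.surj _ (orderBoundedF_const (μ := μ) (φ i))
    (unifOrdContF_const (φ i))
  refine ⟨∑ i, u i ⊗ₜ[L0 μ] evW w i, lt_of_le_of_lt (L0.dL0_mono ?_) hg⟩
  have heval (p : K) : evW (t (∑ i, u i ⊗ₜ[L0 μ] evW w i) - w) p =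
      ∑ i, L0.const μ (φ i p) • evW w i - evW w p := by
    simp only [map_sub, Pi.sub_apply, ht, map_sum, Finset.sum_apply, pointwiseTensor_tmul, hu]
  rw [abs_of_nonneg (pn_nonneg _)]
  refine ((hW.norm _).2 ?_).trans (le_abs_self g)
  rintro _ ⟨p, rfl⟩
  exact heval p ▸ happrox p

end Realization

theorem injective_tensor_with_UCord_general
    (μ : Measure X) [SFinite μ]
    (K : Type*) [UniformSpace K] [CompactSpace K]
    (M : Type*) [AddCommGroup M] [Module (L0 μ) M] [BanachMod μ M]
    (U : Type*) [AddCommGroup U] [Module (L0 μ) U] [BanachMod μ U]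
    (W : Type*) [AddCommGroup W] [Module (L0 μ) W] [BanachMod μ W]
    (E : Type*) [AddCommGroup E] [Module (L0 μ) E] [BanachMod μ E]
    (evU : U →ₗ[L0 μ] (K → L0 μ)) (hU : IsUCordL0 μ K U evU)
    (evW : W →ₗ[L0 μ] (K → M)) (hW : IsUCordMod μ K M W evW)
    (e : U ⊗[L0 μ] M →ₗ[L0 μ] E) (hE : IsEpsTensor μ U M E e) :
    ∃ j : E →ₗ[L0 μ] W,
      ((∀ (u : U) (v : M) (p : K), evW (j (e (u ⊗ₜ[L0 μ] v))) p = evU u p • v)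
        ∧ (∀ x : E, pn μ (j x) = pn μ x)
        ∧ Function.Bijective j)
      ∧ (∀ j' : E →ₗ[L0 μ] W, IsHom μ j' →
          (∀ (u : U) (v : M) (p : K), evW (j' (e (u ⊗ₜ[L0 μ] v))) p = evU u p • v) →
          j' = j) := by
  rcases isEmpty_or_nonempty K with hK | hK
  · have := (hU.mem 0).1.subsingleton
    have := Module.subsingleton (L0 μ) E
    have := Module.subsingleton (L0 μ) W
    exact ⟨0, ⟨fun _ _ p => isEmptyElim p, fun _ => Subsingleton.elim _ _,
      Function.injective_of_subsingleton _, Function.surjective_to_subsingleton _⟩,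
      fun _ _ _ => LinearMap.ext fun _ => Subsingleton.elim _ _⟩
  · obtain ⟨t, ht⟩ := hW.exists_linearMap_eq_pointwiseTensor hU
    obtain ⟨j, hje, hj⟩ := exists_extension_of_pn_eq hE.dense fun α =>
      (hW.isLUB_epsReps hU (ht α)).unique (hE.pn_emb α)
    have hj_tmul (u v p) : evW (j (e (u ⊗ₜ[L0 μ] v))) p = evU u p • v := by
      rw [hje, ht, pointwiseTensor_tmul]
    have hj_dense (w) (ε : ℝ) (hε : ε > 0) : ∃ x, dM μ (j x) w < ε := by
      obtain ⟨α, hα⟩ := hW.exists_dM_lt hU ht w hε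
      exact ⟨e α, by rwa [hje]⟩
    refine ⟨j, ⟨hj_tmul, hj, bijective_of_pn_eq_of_dense hj hj_dense⟩, fun j' hj' hj'_tmul => ?_⟩
    have hcomp : j' ∘ₗ e = j ∘ₗ e := TensorProduct.ext' fun u v =>
      hW.inj (funext fun p => (hj'_tmul u v p).trans (hj_tmul u v p).symm)
    exact hj'.eq_of_dense hE.dense (isHom_of_pn_eq hj) (LinearMap.congr_fun hcomp)

/-- Let `(K,Φ)` be a compact Hausdorff uniform space, `𝕏` a σ-finite
measure space and `ℳ` a Banach `L⁰(𝕏)`-module. The unique linear continuous operator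
`𝔧 : UC_ord(K;L⁰(𝕏)) ⊗̂_ε ℳ → UC_ord(K;ℳ)` with `𝔧(f ⊗ v)(p) = f(p) • v` is an isomorphism
of Banach `L⁰(𝕏)`-modules. Here `U` realizes `UC_ord(K;L⁰(𝕏))`, `W` realizes `UC_ord(K;ℳ)`
and `E` realizes the injective tensor product `U ⊗̂_ε ℳ`. -/
theorem injective_tensor_with_UCord
    (μ : Measure X) [SigmaFinite μ]
    (K : Type*) [UniformSpace K] [CompactSpace K] [T2Space K]
    (M : Type*) [AddCommGroup M] [Module (L0 μ) M] [BanachMod μ M]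
    (U : Type*) [AddCommGroup U] [Module (L0 μ) U] [BanachMod μ U]
    (W : Type*) [AddCommGroup W] [Module (L0 μ) W] [BanachMod μ W]
    (E : Type*) [AddCommGroup E] [Module (L0 μ) E] [BanachMod μ E]
    (evU : U →ₗ[L0 μ] (K → L0 μ)) (hU : IsUCordL0 μ K U evU)
    (evW : W →ₗ[L0 μ] (K → M)) (hW : IsUCordMod μ K M W evW)
    (e : U ⊗[L0 μ] M →ₗ[L0 μ] E) (hE : IsEpsTensor μ U M E e) :
    ∃ j : E →ₗ[L0 μ] W,
      ((∀ (u : U) (v : M) (p : K), evW (j (e (u ⊗ₜ[L0 μ] v))) p = evU u p • v)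
        ∧ (∀ x : E, pn μ (j x) = pn μ x)
        ∧ Function.Bijective j)
      ∧ (∀ j' : E →ₗ[L0 μ] W, IsHom μ j' →
          (∀ (u : U) (v : M) (p : K), evW (j' (e (u ⊗ₜ[L0 μ] v))) p = evU u p • v) →
          j' = j) :=
  injective_tensor_with_UCord_general μ K M U W E evU hU evW hW e hE

end Paper
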